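/- Let (X,ρ) be a quasi-metric space satisfying the monotone geodesic property. Then there exists a constant Λ ∈ (1,∞) such that for all x, y ∈ X and r ∈ (0,∞) there exist a positive integer N(x,y,r) and points x = x₀, x₁, …, x_{N(x,y,r)} = y such that: (i) for every i ∈ {0,…,N(x,y,r)−1} there exists a ball D_i ⊂ B(x_i,r) ∩ B(x_{i+1},r) with B(x_i,r) ∪ B(x_{i+1},r) ⊂ ΛD_i; and (ii) for all x, y ∈ X and every p ∈ (1,∞), N(x,y,r)·r^p → 0 as r → 0. -/

import Mathlib

/-!
Put `K = K₀` and apply the monotone geodesic property at scale `s = r / (2K(1 + K̃))`. Consecutive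
points of the resulting chain are at distance at most `K̃ s ≤ r / (2K)`, and for two points at such a
distance the ball of radius `r / (2K)` about the first one lies in both `r`-balls while its dilate
by `4K²` contains both (`QuasiMetric.exists_ball_of_dist_le`). If `ρ(x,y) < s`, the property does
not apply, but then the one-step chain `x, y` already works.

Each step decreases the distance to `y` by at least `s`, so the chain has at most `ρ(x,y) / s`
steps. Hence `N(x,y,r) ≤ C ρ(x,y) / r + 1` with `C = 2K(1 + K̃)`
(`QuasiMetric.MonotoneGeodesic.exists_chain`), and `N(x,y,r) r ^ p ≤ C ρ(x,y) r ^ (p-1) + r ^ p`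
tends to `0` for `p > 1`.
-/

open MeasureTheory Set Filter
open scoped ENNReal NNReal

noncomputable section

/-- A quasi-metric on `X` with quasi-triangle constant `K0`. -/
structure QuasiMetric (X : Type*) where
  dist : X → X → ℝ
  K0 : ℝ
  one_le_K0 : 1 ≤ K0
  dist_nonneg : ∀ x y, 0 ≤ dist x y
  dist_eq_zero_iff : ∀ x y, dist x y = 0 ↔ x = y
  dist_symm : ∀ x y, dist x y = dist y x
  dist_triangle : ∀ x y z, dist x y ≤ K0 * (dist x z + dist z y)

namespace QuasiMetric

variable {X : Type*}

/-- The `ρ`-ball `B(x,r)`. -/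
def ball (d : QuasiMetric X) (x : X) (r : ℝ) : Set X := {y | d.dist x y < r}

/-- The monotone geodesic property of a quasi-metric space. -/
def MonotoneGeodesic (d : QuasiMetric X) : Prop :=
  ∃ Kt : ℝ, 0 < Kt ∧ ∀ s : ℝ, 0 < s → ∀ x y : X, s ≤ d.dist x y →
    ∃ m : ℕ, 0 < m ∧ ∃ c : ℕ → X, c 0 = x ∧ c m = y ∧
      ∀ i < m, d.dist (c i) (c (i + 1)) ≤ Kt * s ∧
        d.dist (c (i + 1)) (c m) ≤ d.dist (c i) (c m) - s

end QuasiMetric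

/-- `(X, ρ, μ)` is a space of homogeneous type: a quasi-metric space with a doubling
measure defined on a σ-algebra containing the balls, balls having positive finite measure,
infinite diameter, and no atoms. -/
structure IsSHT {X : Type*} [MeasurableSpace X] (d : QuasiMetric X) (μ : Measure X) : Prop where
  measurableSet_ball : ∀ x r, MeasurableSet (d.ball x r)
  doubling : ∃ Cμ : ℝ≥0∞, 1 ≤ Cμ ∧ Cμ < ∞ ∧
    ∀ x r, 0 < r → μ (d.ball x (2 * r)) ≤ Cμ * μ (d.ball x r)
  ball_pos : ∀ x r, 0 < r → 0 < μ (d.ball x r)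
  ball_lt_top : ∀ x r, 0 < r → μ (d.ball x r) < ∞
  diam_infinite : ∀ r : ℝ, ∃ x y : X, r < d.dist x y
  nonatomic : ∀ x, μ {x} = 0

/-- The average `⨍⁻_E f dν` of an `ℝ≥0∞`-valued function over a set. -/
def lavg {α : Type*} [MeasurableSpace α] (ν : Measure α) (E : Set α) (f : α → ℝ≥0∞) : ℝ≥0∞ :=
  (∫⁻ z in E, f z ∂ν) / ν E

variable {X : Type*} [MeasurableSpace X]

/-- The parabolic cylinder `R(x,t,l) = B(x,l) × (t - l^p, t + l^p)`. -/
def cylinder (d : QuasiMetric X) (p : ℝ) (x : X) (t l : ℝ) : Set (X × ℝ) :=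
  d.ball x l ×ˢ Ioo (t - l ^ p) (t + l ^ p)

/-- The lower part `R^-(γ) = B(x,l) × (t - l^p, t - γ l^p)` of a parabolic cylinder. -/
def cylMinus (d : QuasiMetric X) (p : ℝ) (x : X) (t l γ : ℝ) : Set (X × ℝ) :=
  d.ball x l ×ˢ Ioo (t - l ^ p) (t - γ * l ^ p)

/-- The upper part `R^+(γ) = B(x,l) × (t + γ l^p, t + l^p)` of a parabolic cylinder. -/
def cylPlus (d : QuasiMetric X) (p : ℝ) (x : X) (t l γ : ℝ) : Set (X × ℝ) :=
  d.ball x l ×ˢ Ioo (t + γ * l ^ p) (t + l ^ p)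

/-- The temporal translation `E + a` of a set `E ⊆ X × ℝ`. -/
def tShift (E : Set (X × ℝ)) (a : ℝ) : Set (X × ℝ) := {z | (z.1, z.2 - a) ∈ E}

/-- A weight on `X × ℝ`: measurable, a.e. positive and finite, and locally integrable
with respect to `λ = μ × m`. -/
structure IsWeight (d : QuasiMetric X) (μ : Measure X) (p : ℝ) (ω : X × ℝ → ℝ≥0∞) : Prop where
  measurable : Measurable ω
  ae_pos : ∀ᵐ z ∂μ.prod volume, 0 < ω z
  ae_lt_top : ∀ᵐ z ∂μ.prod volume, ω z < ∞
  locally_integrable : ∀ z : X × ℝ, ∃ l : ℝ, 0 < l ∧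
    ∫⁻ w in cylinder d p z.1 z.2 l, ω w ∂μ.prod volume < ∞

/-- The conjugate exponent `q' = q / (q - 1)`. -/
def conjExp (q : ℝ) : ℝ := q / (q - 1)

/-- The parabolic Muckenhoupt constant
`[ω]_{A_q^+(γ)} = sup_R (⨍_{R^-(γ)} ω) (⨍_{R^+(γ)} ω^{1-q'})^{q-1}`. -/
def AqPlusConst (d : QuasiMetric X) (μ : Measure X) (p γ q : ℝ) (ω : X × ℝ → ℝ≥0∞) : ℝ≥0∞ :=
  ⨆ (x : X) (t : ℝ) (l : ℝ) (_ : 0 < l),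
    lavg (μ.prod volume) (cylMinus d p x t l γ) ω *
      lavg (μ.prod volume) (cylPlus d p x t l γ) (fun z => ω z ^ (1 - conjExp q)) ^ (q - 1)

/-- The parabolic Muckenhoupt constant `[ω]_{A_q^-(γ)}`, with the roles of the lower
and upper parts interchanged. -/
def AqMinusConst (d : QuasiMetric X) (μ : Measure X) (p γ q : ℝ) (ω : X × ℝ → ℝ≥0∞) : ℝ≥0∞ :=
  ⨆ (x : X) (t : ℝ) (l : ℝ) (_ : 0 < l),
    lavg (μ.prod volume) (cylPlus d p x t l γ) ω *
      lavg (μ.prod volume) (cylMinus d p x t l γ) (fun z => ω z ^ (1 - conjExp q)) ^ (q - 1)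

/-- The parabolic Muckenhoupt class `A_q^+(γ)`. -/
def AqPlus (d : QuasiMetric X) (μ : Measure X) (p γ q : ℝ) : Set (X × ℝ → ℝ≥0∞) :=
  {ω | IsWeight d μ p ω ∧ AqPlusConst d μ p γ q ω < ∞}

/-- The parabolic Muckenhoupt class `A_q^-(γ)`. -/
def AqMinus (d : QuasiMetric X) (μ : Measure X) (p γ q : ℝ) : Set (X × ℝ → ℝ≥0∞) :=
  {ω | IsWeight d μ p ω ∧ AqMinusConst d μ p γ q ω < ∞}

/-- An adjacent system of dyadic cubes on a space of homogeneous type (Hytönen–Kairema). -/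
structure DyadicSystem (X : Type*) [MeasurableSpace X] (d : QuasiMetric X) where
  K : ℕ
  K_pos : 0 < K
  δ : ℝ
  δ_pos : 0 < δ
  δ_lt_one : δ < 1
  δ_small : 96 * d.K0 ^ 6 * δ ≤ 1
  cubes : Fin K → ℤ → Set (Set X)
  measurableSet_cubes : ∀ τ k Q, Q ∈ cubes τ k → MeasurableSet Q
  cover : ∀ τ k, ⋃₀ cubes τ k = univ
  pairwiseDisjoint : ∀ τ k, (cubes τ k).PairwiseDisjoint id
  nested : ∀ τ (k l : ℤ), k ≤ l → ∀ Q ∈ cubes τ k, ∀ Q' ∈ cubes τ l, Q' ⊆ Q ∨ Disjoint Q' Q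
  c₁ : ℝ
  C₁ : ℝ
  c₁_pos : 0 < c₁
  C₁_pos : 0 < C₁
  sandwich : ∀ τ k Q, Q ∈ cubes τ k →
    ∃ z : X, d.ball z (c₁ * δ ^ k) ⊆ Q ∧ Q ⊆ d.ball z (C₁ * δ ^ k)
  covC : ℝ
  covC_pos : 0 < covC
  ball_subset_cube : ∀ (x : X) (r : ℝ), 0 < r → ∃ τ k Q, Q ∈ cubes τ k ∧
    d.ball x r ⊆ Q ∧ ∀ a ∈ Q, ∀ b ∈ Q, d.dist a b ≤ covC * r

/-- The parabolic rectangle `P(τ,k,α,t) = Q × (t - δ^{kp}, t + δ^{kp})`. -/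
def rect {d : QuasiMetric X} (D : DyadicSystem X d) (p : ℝ) (Q : Set X) (k : ℤ) (t : ℝ) :
    Set (X × ℝ) :=
  Q ×ˢ Ioo (t - (D.δ ^ k) ^ p) (t + (D.δ ^ k) ^ p)

/-- The lower part `P^-(γ) = Q × (t - δ^{kp}, t - γ δ^{kp})` of a parabolic rectangle. -/
def rectMinus {d : QuasiMetric X} (D : DyadicSystem X d) (p : ℝ) (Q : Set X) (k : ℤ)
    (t γ : ℝ) : Set (X × ℝ) :=
  Q ×ˢ Ioo (t - (D.δ ^ k) ^ p) (t - γ * (D.δ ^ k) ^ p)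

/-- The upper part `P^+(γ) = Q × (t + γ δ^{kp}, t + δ^{kp})` of a parabolic rectangle. -/
def rectPlus {d : QuasiMetric X} (D : DyadicSystem X d) (p : ℝ) (Q : Set X) (k : ℤ)
    (t γ : ℝ) : Set (X × ℝ) :=
  Q ×ˢ Ioo (t + γ * (D.δ ^ k) ^ p) (t + (D.δ ^ k) ^ p)

/-- The parabolic maximal function `𝓜^{γ+}` related to parabolic rectangles. -/
def maxRectPlus {d : QuasiMetric X} (D : DyadicSystem X d) (μ : Measure X) (p γ : ℝ)
    (g : X × ℝ → ℝ≥0∞) (z : X × ℝ) : ℝ≥0∞ :=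
  ⨆ (τ : Fin D.K) (k : ℤ) (Q : Set X) (_ : Q ∈ D.cubes τ k) (t : ℝ) (_ : z ∈ rect D p Q k t),
    lavg (μ.prod volume) (rectPlus D p Q k t γ) g

/-- The parabolic maximal function `𝓜^{γ-}` related to parabolic rectangles. -/
def maxRectMinus {d : QuasiMetric X} (D : DyadicSystem X d) (μ : Measure X) (p γ : ℝ)
    (g : X × ℝ → ℝ≥0∞) (z : X × ℝ) : ℝ≥0∞ :=
  ⨆ (τ : Fin D.K) (k : ℤ) (Q : Set X) (_ : Q ∈ D.cubes τ k) (t : ℝ) (_ : z ∈ rect D p Q k t),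
    lavg (μ.prod volume) (rectMinus D p Q k t γ) g

/-- The parabolic maximal function `M^{γ+}` related to parabolic cylinders. -/
def maxCylPlus (d : QuasiMetric X) (μ : Measure X) (p γ : ℝ) (g : X × ℝ → ℝ≥0∞)
    (z : X × ℝ) : ℝ≥0∞ :=
  ⨆ (l : ℝ) (_ : 0 < l), lavg (μ.prod volume) (cylPlus d p z.1 z.2 l γ) g

/-- The parabolic maximal function `M^{γ-}` related to parabolic cylinders. -/
def maxCylMinus (d : QuasiMetric X) (μ : Measure X) (p γ : ℝ) (g : X × ℝ → ℝ≥0∞)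
    (z : X × ℝ) : ℝ≥0∞ :=
  ⨆ (l : ℝ) (_ : 0 < l), lavg (μ.prod volume) (cylMinus d p z.1 z.2 l γ) g

/-- The parabolic maximal function `𝓜^{γ-}ν` of a measure, related to parabolic rectangles. -/
def measMaxRectMinus {d : QuasiMetric X} (D : DyadicSystem X d) (μ : Measure X) (p γ : ℝ)
    (ν : Measure (X × ℝ)) (z : X × ℝ) : ℝ≥0∞ :=
  ⨆ (τ : Fin D.K) (k : ℤ) (Q : Set X) (_ : Q ∈ D.cubes τ k) (t : ℝ) (_ : z ∈ rect D p Q k t),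
    ν (rectMinus D p Q k t γ) / (μ.prod volume) (rectMinus D p Q k t γ)

/-- The parabolic maximal function `𝓜^{γ+}ν` of a measure, related to parabolic rectangles. -/
def measMaxRectPlus {d : QuasiMetric X} (D : DyadicSystem X d) (μ : Measure X) (p γ : ℝ)
    (ν : Measure (X × ℝ)) (z : X × ℝ) : ℝ≥0∞ :=
  ⨆ (τ : Fin D.K) (k : ℤ) (Q : Set X) (_ : Q ∈ D.cubes τ k) (t : ℝ) (_ : z ∈ rect D p Q k t),
    ν (rectPlus D p Q k t γ) / (μ.prod volume) (rectPlus D p Q k t γ)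

/-- The parabolic maximal function `M^{γ-}ν` of a measure, related to parabolic cylinders. -/
def measMaxCylMinus (d : QuasiMetric X) (μ : Measure X) (p γ : ℝ) (ν : Measure (X × ℝ))
    (z : X × ℝ) : ℝ≥0∞ :=
  ⨆ (l : ℝ) (_ : 0 < l),
    ν (cylMinus d p z.1 z.2 l γ) / (μ.prod volume) (cylMinus d p z.1 z.2 l γ)

/-- The parabolic maximal function `M^{γ+}ν` of a measure, related to parabolic cylinders. -/
def measMaxCylPlus (d : QuasiMetric X) (μ : Measure X) (p γ : ℝ) (ν : Measure (X × ℝ))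
    (z : X × ℝ) : ℝ≥0∞ :=
  ⨆ (l : ℝ) (_ : 0 < l),
    ν (cylPlus d p z.1 z.2 l γ) / (μ.prod volume) (cylPlus d p z.1 z.2 l γ)

/-- The parabolic Muckenhoupt class `A_1^+(γ)`: weights with `𝓜^{γ-}ω ≤ C ω` a.e. -/
def A1Plus {d : QuasiMetric X} (D : DyadicSystem X d) (μ : Measure X) (p γ : ℝ) :
    Set (X × ℝ → ℝ≥0∞) :=
  {ω | IsWeight d μ p ω ∧ ∃ C : ℝ≥0∞, 0 < C ∧ C < ∞ ∧
    ∀ᵐ z ∂μ.prod volume, maxRectMinus D μ p γ ω z ≤ C * ω z}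

/-- The parabolic Muckenhoupt class `A_1^-(γ)`: weights with `𝓜^{γ+}ω ≤ C ω` a.e. -/
def A1Minus {d : QuasiMetric X} (D : DyadicSystem X d) (μ : Measure X) (p γ : ℝ) :
    Set (X × ℝ → ℝ≥0∞) :=
  {ω | IsWeight d μ p ω ∧ ∃ C : ℝ≥0∞, 0 < C ∧ C < ∞ ∧
    ∀ᵐ z ∂μ.prod volume, maxRectPlus D μ p γ ω z ≤ C * ω z}

/-- `T` is bounded from `L^q(X×ℝ, ω)` to `L^{q,∞}(X×ℝ, ω)`. -/
def WeakBdd (ν : Measure (X × ℝ)) (T : (X × ℝ → ℝ≥0∞) → X × ℝ → ℝ≥0∞) (q : ℝ)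
    (ω : X × ℝ → ℝ≥0∞) : Prop :=
  ∃ C : ℝ≥0∞, 0 < C ∧ C < ∞ ∧ ∀ f : X × ℝ → ℝ≥0∞, Measurable f →
    ∫⁻ z, f z ^ q * ω z ∂ν < ∞ → ∀ ξ : ℝ≥0∞, 0 < ξ → ξ < ∞ →
      ∫⁻ z in {w | ξ < T f w}, ω z ∂ν ≤ C * ξ ^ (-q) * ∫⁻ z, f z ^ q * ω z ∂ν

/-- `T` is bounded from `L^q(X×ℝ, ω)` to `L^q(X×ℝ, ω)`. -/
def StrongBdd (ν : Measure (X × ℝ)) (T : (X × ℝ → ℝ≥0∞) → X × ℝ → ℝ≥0∞) (q : ℝ)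
    (ω : X × ℝ → ℝ≥0∞) : Prop :=
  ∃ C : ℝ≥0∞, 0 < C ∧ C < ∞ ∧ ∀ f : X × ℝ → ℝ≥0∞, Measurable f →
    ∫⁻ z, f z ^ q * ω z ∂ν < ∞ →
      ∫⁻ z, T f z ^ q * ω z ∂ν ≤ C * ∫⁻ z, f z ^ q * ω z ∂ν

/-- Local integrability of an `ℝ≥0∞`-valued function on `X × ℝ`. -/
def LocIntE (d : QuasiMetric X) (μ : Measure X) (p : ℝ) (g : X × ℝ → ℝ≥0∞) : Prop :=
  ∀ z : X × ℝ, ∃ l : ℝ, 0 < l ∧ ∫⁻ w in cylinder d p z.1 z.2 l, g w ∂μ.prod volume < ∞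

/-- Local integrability of a real-valued function on `X × ℝ`. -/
def LocIntR (d : QuasiMetric X) (μ : Measure X) (p : ℝ) (u : X × ℝ → ℝ) : Prop :=
  ∀ z : X × ℝ, ∃ l : ℝ, 0 < l ∧ IntegrableOn u (cylinder d p z.1 z.2 l) (μ.prod volume)

/-- The parabolic space `PBMO^+(X × ℝ)`. -/
def PBMOPlus (d : QuasiMetric X) (μ : Measure X) (p : ℝ) : Set (X × ℝ → ℝ) :=
  {u | LocIntR d μ p u ∧ ∃ γ : ℝ, 0 < γ ∧ γ < 1 ∧ ∃ a : X → ℝ → ℝ → ℝ, ∃ M : ℝ≥0∞, M < ∞ ∧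
    ∀ (x : X) (t l : ℝ), 0 < l →
      lavg (μ.prod volume) (cylPlus d p x t l γ)
          (fun z => ENNReal.ofReal (u z - a x t l)) +
        lavg (μ.prod volume) (cylMinus d p x t l γ)
          (fun z => ENNReal.ofReal (a x t l - u z)) ≤ M}

/-- The parabolic space `PBMO^-(X × ℝ)`. -/
def PBMOMinus (d : QuasiMetric X) (μ : Measure X) (p : ℝ) : Set (X × ℝ → ℝ) :=
  {u | LocIntR d μ p u ∧ ∃ γ : ℝ, 0 < γ ∧ γ < 1 ∧ ∃ a : X → ℝ → ℝ → ℝ, ∃ M : ℝ≥0∞, M < ∞ ∧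
    ∀ (x : X) (t l : ℝ), 0 < l →
      lavg (μ.prod volume) (cylMinus d p x t l γ)
          (fun z => ENNReal.ofReal (u z - a x t l)) +
        lavg (μ.prod volume) (cylPlus d p x t l γ)
          (fun z => ENNReal.ofReal (a x t l - u z)) ≤ M}

end

namespace QuasiMetric

theorem exists_ball_of_dist_le {X : Type*} (d : QuasiMetric X) {r : ℝ} (hr : 0 < r) {u v : X}
    (huv : d.dist u v ≤ r / (2 * d.K0)) :
    ∃ (z : X) (s : ℝ), 0 < s ∧ d.ball z s ⊆ d.ball u r ∩ d.ball v r ∧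
      d.ball u r ∪ d.ball v r ⊆ d.ball z (4 * d.K0 ^ 2 * s) := by
  have hK := d.one_le_K0
  have hK0 : 0 < d.K0 := by linarith
  have hle : r / (2 * d.K0) ≤ r / 2 :=
    div_le_div_of_nonneg_left hr.le (by norm_num) (by linarith)
  have hmul : d.K0 * (r / (2 * d.K0)) = r / 2 := by field_simp
  have hrad : 4 * d.K0 ^ 2 * (r / (2 * d.K0)) = 2 * d.K0 * r := by field_simp; ring
  have hKr : r ≤ d.K0 * r := le_mul_of_one_le_left hr.le hK
  refine ⟨u, r / (2 * d.K0), by positivity, fun w hw => ⟨?_, ?_⟩, ?_⟩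
  · have hw' : d.dist u w < r / (2 * d.K0) := hw
    show d.dist u w < r
    linarith
  · have hw' : d.dist u w < r / (2 * d.K0) := hw
    have h1 := d.dist_triangle v w u
    rw [d.dist_symm v u] at h1
    show d.dist v w < r
    have h2 : d.K0 * d.dist u w < d.K0 * (r / (2 * d.K0)) := mul_lt_mul_of_pos_left hw' hK0
    have h3 : d.K0 * d.dist u v ≤ d.K0 * (r / (2 * d.K0)) :=
      mul_le_mul_of_nonneg_left huv hK0.le
    linarith
  · rw [hrad]
    rintro w (hw | hw)
    · have hw' : d.dist u w < r := hw
      show d.dist u w < 2 * d.K0 * r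
      linarith
    · have hw' : d.dist v w < r := hw
      show d.dist u w < 2 * d.K0 * r
      have h1 := d.dist_triangle u w v
      have h2 : d.K0 * d.dist v w < d.K0 * r := mul_lt_mul_of_pos_left hw' hK0
      have h3 : d.K0 * d.dist u v ≤ d.K0 * (r / (2 * d.K0)) :=
        mul_le_mul_of_nonneg_left huv hK0.le
      linarith

/-- A chain with steps of size at most `r / (2K₀)` joins any two points, and the number of its
steps is at most affine in `1 / r`. -/
theorem MonotoneGeodesic.exists_chain {X : Type*} {d : QuasiMetric X}
    (hMG : d.MonotoneGeodesic) :
    ∃ C : ℝ, ∀ (x y : X) (r : ℝ), 0 < r → ∃ n : ℕ, 0 < n ∧ (n : ℝ) ≤ C * d.dist x y / r + 1 ∧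
      ∃ c : ℕ → X, c 0 = x ∧ c n = y ∧
        ∀ i < n, d.dist (c i) (c (i + 1)) ≤ r / (2 * d.K0) := by
  obtain ⟨k, hk, h⟩ := hMG
  have hK0 : 0 < d.K0 := by linarith [d.one_le_K0]
  refine ⟨2 * d.K0 * (1 + k), fun x y r hr => ?_⟩
  set s : ℝ := r / (2 * d.K0 * (1 + k)) with hs
  have hs0 : 0 < s := by positivity
  have hsum : s + k * s = r / (2 * d.K0) := by rw [hs]; field_simp
  have hks : 0 < k * s := by positivity
  have hC : 2 * d.K0 * (1 + k) * d.dist x y / r = d.dist x y / s := by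
    rw [hs]; field_simp
  rw [hC]
  have hd := d.dist_nonneg x y
  rcases lt_or_ge (d.dist x y) s with hlt | hge
  · refine ⟨1, one_pos, ?_, fun i => if i = 0 then x else y, by simp, by simp, ?_⟩
    · have : 0 ≤ d.dist x y / s := by positivity
      push_cast
      linarith
    · intro i hi
      obtain rfl : i = 0 := by omega
      simp only [if_true, zero_add, one_ne_zero, if_false]
      linarith
  · obtain ⟨m, hm, c, hc0, hcm, hc⟩ := h s hs0 x y hge
    refine ⟨m, hm, ?_, c, hc0, hcm, fun i hi => by linarith [(hc i hi).1]⟩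
    have hdec : ∀ i ≤ m, d.dist (c i) (c m) ≤ d.dist x y - i * s := by
      intro i
      induction i with
      | zero => intro _; simp [hc0, hcm]
      | succ i ih =>
        intro hi
        have h1 := ih (by omega)
        have h2 := (hc i (by omega)).2
        push_cast
        linarith
    have h1 : (m : ℝ) ≤ d.dist x y / s := by
      rw [le_div_iff₀ hs0]
      linarith [hdec m le_rfl, d.dist_nonneg (c m) (c m)]
    linarith

end QuasiMetric

/-- Lemma 2.5: the chaining ball property of a quasi-metric space
with the monotone geodesic property. -/
theorem statement19 {X : Type*} [Nonempty X] (d : QuasiMetric X)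
    (hMG : d.MonotoneGeodesic) :
    ∃ Λ : ℝ, 1 < Λ ∧ ∃ N : X → X → ℝ → ℕ,
      (∀ (x y : X) (r : ℝ), 0 < r → 0 < N x y r ∧
        ∃ c : ℕ → X, c 0 = x ∧ c (N x y r) = y ∧
          ∀ i < N x y r, ∃ (z : X) (s : ℝ), 0 < s ∧
            d.ball z s ⊆ d.ball (c i) r ∩ d.ball (c (i + 1)) r ∧
            d.ball (c i) r ∪ d.ball (c (i + 1)) r ⊆ d.ball z (Λ * s)) ∧
      ∀ (x y : X) (p : ℝ), 1 < p →
        Filter.Tendsto (fun r : ℝ => (N x y r : ℝ) * r ^ p)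
          (nhdsWithin 0 (Set.Ioi 0)) (nhds 0) := by
  obtain ⟨C, hC⟩ := hMG.exists_chain
  refine ⟨4 * d.K0 ^ 2, by nlinarith [d.one_le_K0], ?_⟩
  -- The implication `0 < r → _` is kept inside the choice, so that `N` is defined for every `r`.
  have hC' : ∀ (x y : X) (r : ℝ), ∃ n : ℕ, 0 < r → 0 < n ∧ (n : ℝ) ≤ C * d.dist x y / r + 1 ∧
      ∃ c : ℕ → X, c 0 = x ∧ c n = y ∧
        ∀ i < n, d.dist (c i) (c (i + 1)) ≤ r / (2 * d.K0) := by
    intro x y r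
    by_cases hr : 0 < r
    · obtain ⟨n, hn⟩ := hC x y r hr
      exact ⟨n, fun _ => hn⟩
    · exact ⟨0, fun h => absurd h hr⟩
  choose N hN using hC'
  refine ⟨N, fun x y r hr => ?_, fun x y p hp => ?_⟩
  · obtain ⟨hpos, -, c, hc0, hcN, hc⟩ := hN x y r hr
    exact ⟨hpos, c, hc0, hcN, fun i hi => d.exists_ball_of_dist_le hr (hc i hi)⟩
  · have hpow : ∀ q : ℝ, 0 < q → Tendsto (fun r : ℝ => r ^ q) (nhdsWithin 0 (Ioi 0)) (nhds 0) := by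
      intro q hq
      have h := (Real.continuousAt_rpow_const 0 q (Or.inr hq.le)).tendsto
      rw [Real.zero_rpow hq.ne'] at h
      exact h.mono_left nhdsWithin_le_nhds
    have hlim : Tendsto (fun r : ℝ => C * d.dist x y * r ^ (p - 1) + r ^ p)
        (nhdsWithin 0 (Ioi 0)) (nhds 0) := by
      simpa using ((hpow (p - 1) (by linarith)).const_mul (C * d.dist x y)).add
        (hpow p (by linarith))
    refine tendsto_of_tendsto_of_tendsto_of_le_of_le' tendsto_const_nhds hlim ?_ ?_
    · filter_upwards [self_mem_nhdsWithin] with r hr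
      have hr0 : (0 : ℝ) < r := hr
      positivity
    · filter_upwards [self_mem_nhdsWithin] with r hr
      have hr0 : (0 : ℝ) < r := hr
      calc (N x y r : ℝ) * r ^ p ≤ (C * d.dist x y / r + 1) * r ^ p := by
            gcongr
            exact (hN x y r hr0).2.1
        _ = C * d.dist x y * r ^ (p - 1) + r ^ p := by
            rw [Real.rpow_sub_one hr0.ne']
            ring
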